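/- arXiv:1505.00984 — 2 statements merged into one kernel-verified Lean document; each statement's English description precedes it below -/
import Mathlib

section
/- Fix n ≥ 1, and for j = 1,…,2n set α_j = C(2n−1, j−1)^{1/2}. Let Λ_{2n} = α₁^{-1}ℤ ⊕ ⋯ ⊕ α_{2n}^{-1}ℤ ⊂ ℝ^{2n} and N = ∏_{j=1}^{2n} C(2n−1, j−1). Then Γ_{2n+1} = {(u,t) ∈ H_{2n+1} : u ∈ Λ_{2n}, t ∈ (1/N)ℤ} is a subgroup of the Heisenberg group H_{2n+1}, and it is discrete (every point of Γ_{2n+1} has a neighbourhood in ℝ^{2n} × ℝ meeting Γ_{2n+1} only in that point). -/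
/-!
For antidiagonal indices `i + j = 2n + 1` (1-based), symmetry of the binomial coefficients gives
`α_i = α_j`. Hence for `u, v ∈ Λ` each nonzero term `± u_i v_j` of `⟨u, J v⟩` equals
`± (α_i u_i) (α_j v_j) / C(2n-1, i-1)`, an integer divided by a divisor of `N`, so the form `⟨u, J v⟩`
takes values in `(1/N)ℤ` on `Λ` (`form_mem_invNInt`); this is closure under multiplication.
Discreteness holds because the maps `α_j u_j` and `N t` are integer-valued on `Γ` and injective
in the coordinate: two points of `Γ` at which all of them differ by less than `1` coincide.
-/

noncomputable section

open Matrix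

/-- The symplectic `2n × 2n` matrix `J` with (1-based) entries
`J i j = (-1)^j` if `i + j = 2n + 1` and `0` otherwise. -/
def Jmat (n : ℕ) : Matrix (Fin (2*n)) (Fin (2*n)) ℝ :=
  Matrix.of fun i j =>
    if ((i : ℕ) + 1) + ((j : ℕ) + 1) = 2*n + 1 then (-1 : ℝ)^((j : ℕ) + 1) else 0

/-- The Heisenberg multiplication on `ℝ^{2n} × ℝ`:
`(u₁,t₁)(u₂,t₂) = (u₁ + u₂, t₁ + t₂ + ⟨u₁, J u₂⟩)`. -/
def heisMul (n : ℕ) (p q : (Fin (2*n) → ℝ) × ℝ) : (Fin (2*n) → ℝ) × ℝ :=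
  (p.1 + q.1, p.2 + q.2 + p.1 ⬝ᵥ (Jmat n).mulVec q.1)

/-- `α_j = C(2n-1, j-1)^{1/2}` (with `j` being the 1-based index). -/
def alphaCoef (n : ℕ) (j : Fin (2*n)) : ℝ :=
  Real.sqrt (Nat.choose (2*n - 1) (j : ℕ))

/-- The lattice `Λ_{2n} = α₁⁻¹ℤ ⊕ ⋯ ⊕ α_{2n}⁻¹ℤ ⊆ ℝ^{2n}`, i.e. the set of
vectors `u` such that `α_j u_j ∈ ℤ` for every `j`. -/
def LambdaLattice (n : ℕ) : Set (Fin (2*n) → ℝ) :=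
  {u | ∀ j, ∃ k : ℤ, alphaCoef n j * u j = (k : ℝ)}

/-- `N = α₁² ⋯ α_{2n}² = ∏_j C(2n-1, j-1)`. -/
def Nden (n : ℕ) : ℕ := ∏ j : Fin (2*n), Nat.choose (2*n - 1) (j : ℕ)

/-- The discrete subgroup `Γ_{2n+1} = {(u,t) : u ∈ Λ_{2n}, t ∈ (1/N)ℤ}` of the
Heisenberg group. -/
def GammaSubgroup (n : ℕ) : Set ((Fin (2*n) → ℝ) × ℝ) :=
  {p | p.1 ∈ LambdaLattice n ∧ ∃ k : ℤ, p.2 = (k : ℝ) / (Nden n : ℝ)}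

/-- The `2n`-dimensional irreducible representation of `SL(2,ℝ)`, given (in 1-based
indices `i, j`) by
`Z(A)_{ij} = Σ_l C(j-1, l) C(2n-j, 2n-i-l) α_i⁻¹ α_j a^{2n-i-l} b^l c^{i+l-j} d^{j-l-1}`,
the sum running over those `l` for which both binomial coefficients are nonzero
(equivalently, over `l` with `j ≤ i + l ≤ 2n`; for such `l` all exponents occurring
are nonnegative). -/
def Zrep (n : ℕ) (A : Matrix (Fin 2) (Fin 2) ℝ) : Matrix (Fin (2*n)) (Fin (2*n)) ℝ :=
  Matrix.of fun i j =>
    ∑ l ∈ Finset.range (2*n + 1),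
      if ((j : ℕ) + 1) ≤ ((i : ℕ) + 1) + l ∧ ((i : ℕ) + 1) + l ≤ 2*n then
        (Nat.choose (j : ℕ) l : ℝ) *
        (Nat.choose (2*n - ((j : ℕ) + 1)) (2*n - ((i : ℕ) + 1) - l) : ℝ) *
        (alphaCoef n i)⁻¹ * alphaCoef n j *
        (A 0 0)^(2*n - ((i : ℕ) + 1) - l) * (A 0 1)^l *
        (A 1 0)^(((i : ℕ) + 1) + l - ((j : ℕ) + 1)) * (A 1 1)^((j : ℕ) - l)
      else 0


lemma choose_pos_fin (n : ℕ) (j : Fin (2*n)) : 0 < Nat.choose (2*n - 1) (j : ℕ) :=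
  Nat.choose_pos (by have := j.2; omega)

lemma alphaCoef_pos (n : ℕ) (j : Fin (2*n)) : 0 < alphaCoef n j :=
  Real.sqrt_pos.2 (by exact_mod_cast choose_pos_fin n j)

lemma Nden_pos (n : ℕ) : 0 < Nden n :=
  Finset.prod_pos fun j _ => choose_pos_fin n j

/-- The numbers whose `N`-th multiple is an integer, as an additive subgroup of `ℝ`. -/
def invNInt (n : ℕ) : AddSubgroup ℝ :=
  (Int.castAddHom ℝ).range.comap (AddMonoidHom.mulLeft (Nden n : ℝ))

lemma mem_invNInt {n : ℕ} {t : ℝ} :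
    t ∈ invNInt n ↔ ∃ k : ℤ, t = (k : ℝ) / (Nden n : ℝ) := by
  have hN : (Nden n : ℝ) ≠ 0 := by exact_mod_cast (Nden_pos n).ne'
  simp only [invNInt, AddSubgroup.mem_comap, AddMonoidHom.mem_range, Int.coe_castAddHom,
    AddMonoidHom.coe_mulLeft, eq_div_iff hN]
  exact exists_congr fun k => by rw [mul_comm, eq_comm]

/-- A single nonzero term of `⟨u, J v⟩`, up to sign. -/
lemma mul_mem_invNInt {n : ℕ} {u v : Fin (2*n) → ℝ} (hu : u ∈ LambdaLattice n)
    (hv : v ∈ LambdaLattice n) {i j : Fin (2*n)}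
    (hij : ((i : ℕ) + 1) + ((j : ℕ) + 1) = 2*n + 1) : u i * v j ∈ invNInt n := by
  obtain ⟨k, hk⟩ := hu i
  obtain ⟨l, hl⟩ := hv j
  have hα : alphaCoef n j = alphaCoef n i := by
    unfold alphaCoef
    rw [Nat.choose_symm_of_eq_add (show 2*n - 1 = (j : ℕ) + (i : ℕ) by omega)]
  have hsq : alphaCoef n i * alphaCoef n i = (Nat.choose (2*n - 1) (i : ℕ) : ℝ) :=
    Real.mul_self_sqrt (Nat.cast_nonneg _)
  obtain ⟨d, hd⟩ : Nat.choose (2*n - 1) (i : ℕ) ∣ Nden n :=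
    Finset.dvd_prod_of_mem (fun i : Fin (2*n) => Nat.choose (2*n - 1) (i : ℕ))
      (Finset.mem_univ i)
  have hN : (Nden n : ℝ) ≠ 0 := by exact_mod_cast (Nden_pos n).ne'
  refine mem_invNInt.2 ⟨k * l * d, ?_⟩
  rw [eq_div_iff hN, hd]
  push_cast
  rw [← hsq, ← hk, ← hl, hα]
  ring

lemma form_mem_invNInt {n : ℕ} {u v : Fin (2*n) → ℝ} (hu : u ∈ LambdaLattice n)
    (hv : v ∈ LambdaLattice n) : u ⬝ᵥ (Jmat n).mulVec v ∈ invNInt n := by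
  simp only [dotProduct, mulVec, Finset.mul_sum]
  refine sum_mem fun i _ => sum_mem fun j _ => ?_
  simp only [Jmat, Matrix.of_apply]
  split_ifs with hij
  · have h := mul_mem_invNInt hu hv hij
    rcases neg_one_pow_eq_or ℝ ((j : ℕ) + 1) with h1 | h1 <;> rw [h1]
    · simpa using h
    · simpa using neg_mem h
  · simp

/-- Two reals whose multiples by `c ≠ 0` are integers at distance less than `1` are equal. -/
lemma eq_of_mul_int {c x y : ℝ} (hc : c ≠ 0) {k l : ℤ} (hx : c * x = k) (hy : c * y = l)
    (h : |c * x - c * y| < 1) : x = y := by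
  rw [hx, hy] at h
  have hkl : |k - l| < 1 := by exact_mod_cast h
  have : k = l := by have := Int.abs_lt_one_iff.1 hkl; omega
  exact mul_left_cancel₀ hc (by rw [hx, hy, this])

/-- `Γ_{2n+1} = {(u,t) : u ∈ Λ_{2n}, t ∈ (1/N)ℤ}` is a subgroup of the
Heisenberg group `H_{2n+1}` (it contains the identity and is closed under multiplication
and inverses), and it is discrete: every point of `Γ_{2n+1}` has a neighbourhood in
`ℝ^{2n} × ℝ` meeting `Γ_{2n+1}` only in that point. -/
theorem gamma_discrete_subgroup (n : ℕ) (hn : 1 ≤ n) :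
    ((0, 0) : (Fin (2*n) → ℝ) × ℝ) ∈ GammaSubgroup n ∧
    (∀ p ∈ GammaSubgroup n, ∀ q ∈ GammaSubgroup n, heisMul n p q ∈ GammaSubgroup n) ∧
    (∀ p ∈ GammaSubgroup n, (-p.1, -p.2) ∈ GammaSubgroup n) ∧
    (∀ p ∈ GammaSubgroup n, ∃ U : Set ((Fin (2*n) → ℝ) × ℝ),
      IsOpen U ∧ p ∈ U ∧ U ∩ GammaSubgroup n = {p}) := by
  have hN : (Nden n : ℝ) ≠ 0 := by exact_mod_cast (Nden_pos n).ne'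
  refine ⟨⟨fun j => ⟨0, by simp⟩, 0, by simp⟩, ?_, ?_, ?_⟩
  · rintro p ⟨hp, hp'⟩ q ⟨hq, hq'⟩
    refine ⟨fun j => ?_, mem_invNInt.1 ?_⟩
    · obtain ⟨k, hk⟩ := hp j
      obtain ⟨l, hl⟩ := hq j
      exact ⟨k + l, by simp [heisMul, mul_add, hk, hl]⟩
    · exact add_mem (add_mem (mem_invNInt.2 hp') (mem_invNInt.2 hq')) (form_mem_invNInt hp hq)
  · rintro p ⟨hp, hp'⟩
    refine ⟨fun j => ?_, mem_invNInt.1 (neg_mem (mem_invNInt.2 hp'))⟩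
    obtain ⟨k, hk⟩ := hp j
    exact ⟨-k, by simp [hk]⟩
  · rintro p hp
    refine ⟨(⋂ j, {q | |alphaCoef n j * q.1 j - alphaCoef n j * p.1 j| < 1}) ∩
      {q | |(Nden n : ℝ) * q.2 - Nden n * p.2| < 1}, ?_, by simp, ?_⟩
    · exact (isOpen_iInter_of_finite fun j => isOpen_lt (by fun_prop) (by fun_prop)).inter
        (isOpen_lt (by fun_prop) (by fun_prop))
    · ext q
      simp only [Set.mem_singleton_iff]
      constructor
      · rintro ⟨⟨h1, h2⟩, hq, l, hl⟩
        obtain ⟨hp, k, hk⟩ := hp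
        refine Prod.ext (funext fun j => ?_) ?_
        · obtain ⟨a, ha⟩ := hq j
          obtain ⟨b, hb⟩ := hp j
          exact eq_of_mul_int (alphaCoef_pos n j).ne' ha hb (Set.mem_iInter.1 h1 j)
        · exact eq_of_mul_int hN (by rw [hl, mul_div_cancel₀ _ hN])
            (by rw [hk, mul_div_cancel₀ _ hN]) h2
      · rintro rfl
        exact ⟨by simp, hp⟩

end
end

section
/- Fix n ≥ 1 and let Z : SL(2,ℝ) → M_{2n}(ℝ) be given by Z(A)_{ij} = Σ_{l=0}^{2n} C(j−1, l) C(2n−j, 2n−i−l) α_i^{-1} α_j a^{2n−i−l} b^{l} c^{i+l−j} d^{j−l−1} for A = [[a,b],[c,d]] ∈ SL(2,ℝ), where α_j = C(2n−1, j−1)^{1/2}. Let J be the 2n×2n real matrix with J_{ij} = (−1)^j if i + j = 2n + 1 and J_{ij} = 0 otherwise. Then for every A ∈ SL(2,ℝ) and all u, v ∈ ℝ^{2n} one has ⟨Z(A)u, J Z(A)v⟩ = ⟨u, J v⟩ (that is, Zᵀ(A) J Z(A) = J). Consequently, for every A ∈ SL(2,ℝ) the map (u,t) ↦ (Z(A)u,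 t) is an automorphism of the Heisenberg group H_{2n+1}. -/
/-! `Z(A)` is the action of `A` on binary forms of degree `m = 2n - 1`, written in the basis of
monomials normalised by the `α_i`. The binomial theorem shows this on powers of linear forms: with
`w(x, y)_i = α_i x^{m-i} y^i` (`powVec`) one has `Z(A) w(1, s) = w(a + bs, c + ds)`
(`Zrep_mulVec_powVec`), because the `(i, j)` entry of `Z(A)` is `α_i⁻¹ α_j` times the coefficient of
`X^{m-i}` in `(aX + c)^{m-j} (bX + d)^j`. The form `J` is likewise computed by the binomial theorem:
`⟨w(x, y), J w(x', y')⟩ = -(y x' - x y')^m` (`powVec_form`), which depends only on a `2 × 2`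
determinant, so it is unchanged when `A` of determinant one acts on both arguments.

Hence `Z(A)ᵀ J Z(A)` and `J` agree on the vectors `w(1, s)`. For `s = 0, …, m` these are the columns
of a diagonal matrix times a Vandermonde matrix, so they span and the two matrices are equal.
Bijectivity follows since `J` is invertible. -/

noncomputable section

open Matrix

open Polynomial in
lemma coeff_linear_pow (a c : ℝ) (N k : ℕ) :
    ((C a * X + C c) ^ N).coeff k = a ^ k * c ^ (N - k) * (N.choose k : ℝ) := by
  rw [add_pow, finsetSum_coeff]
  have h : ∀ p ∈ Finset.range (N + 1),
      ((C a * X) ^ p * C c ^ (N - p) * ((N.choose p : ℕ) : ℝ[X])).coeff k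
        = if k = p then a ^ p * c ^ (N - p) * (N.choose p : ℝ) else 0 := by
    intro p _
    have : (C a * X) ^ p * C c ^ (N - p) * ((N.choose p : ℕ) : ℝ[X])
        = C (a ^ p * c ^ (N - p) * (N.choose p : ℝ)) * X ^ p := by
      simp only [mul_pow, map_mul, map_pow, map_natCast]
      ring
    rw [this, coeff_C_mul_X_pow]
  rw [Finset.sum_congr rfl h, Finset.sum_ite_eq]
  split_ifs with hk
  · rfl
  · rw [Nat.choose_eq_zero_of_lt (by simpa using hk)]
    simp

lemma alphaCoef_sq (n : ℕ) (j : Fin (2*n)) :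
    alphaCoef n j * alphaCoef n j = ((2*n - 1).choose (j : ℕ) : ℝ) :=
  Real.mul_self_sqrt (Nat.cast_nonneg _)

lemma alphaCoef_ne_zero (n : ℕ) (j : Fin (2*n)) : alphaCoef n j ≠ 0 := by
  have : 0 < (2*n - 1).choose (j : ℕ) := Nat.choose_pos (by omega)
  exact (Real.sqrt_pos.2 (by exact_mod_cast this)).ne'

lemma alphaCoef_rev (n : ℕ) (j : Fin (2*n)) : alphaCoef n j.rev = alphaCoef n j := by
  unfold alphaCoef
  rw [Fin.val_rev, ← Nat.choose_symm (n := 2*n - 1) (k := (j : ℕ)) (by omega)]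
  congr 3
  omega

open Polynomial in
/-- The entries of `Z(A)` are, up to the normalisation by `α`, the coefficients of
`(aX + c)^{m-j} (bX + d)^j`, where `m = 2n - 1`. -/
lemma Zrep_apply (n : ℕ) (A : Matrix (Fin 2) (Fin 2) ℝ) (i j : Fin (2*n)) :
    Zrep n A i j = (alphaCoef n i)⁻¹ * alphaCoef n j *
      ((C (A 0 1) * X + C (A 1 1)) ^ (j : ℕ) *
        (C (A 0 0) * X + C (A 1 0)) ^ (2*n - 1 - (j : ℕ))).coeff (2*n - 1 - (i : ℕ)) := by
  have hi := i.isLt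
  have hj := j.isLt
  rw [coeff_mul, Finset.Nat.sum_antidiagonal_eq_sum_range_succ_mk, Finset.mul_sum]
  simp only [Zrep, Matrix.of_apply]
  symm
  have hsub : Finset.range (2*n - 1 - (i : ℕ)).succ ⊆ Finset.range (2*n + 1) := by
    intro l hl
    simp only [Finset.mem_range] at hl ⊢
    omega
  rw [← Finset.sum_subset hsub]
  · refine Finset.sum_congr rfl fun l hl => ?_
    simp only [Finset.mem_range] at hl
    rw [coeff_linear_pow, coeff_linear_pow]
    split_ifs with h
    · rw [show 2*n - ((j : ℕ) + 1) = 2*n - 1 - j by omega,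
        show 2*n - ((i : ℕ) + 1) - l = 2*n - 1 - i - l by omega,
        show (i : ℕ) + 1 + l - (j + 1) = 2*n - 1 - j - (2*n - 1 - i - l) by omega]
      ring
    · rw [Nat.choose_eq_zero_of_lt (show 2*n - 1 - (j : ℕ) < 2*n - 1 - i - l by omega)]
      simp
  · intro l _ hl
    simp only [Finset.mem_range] at hl
    rw [if_neg (by omega)]

/-- The coordinate vector `w(x, y)_i = α_i x^{m-i} y^i`, `m = 2n - 1`, of the `m`-th power of the
linear form with coefficients `(x, y)`. -/
def powVec (n : ℕ) (x y : ℝ) : Fin (2*n) → ℝ :=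
  fun i => alphaCoef n i * x ^ (2*n - 1 - (i : ℕ)) * y ^ (i : ℕ)

open Polynomial in
lemma Zrep_mulVec_powVec (n : ℕ) (A : Matrix (Fin 2) (Fin 2) ℝ) (s : ℝ) :
    (Zrep n A).mulVec (powVec n 1 s) = powVec n (A 0 0 + A 0 1 * s) (A 1 0 + A 1 1 * s) := by
  ext i
  have hi := i.isLt
  set q : ℝ[X] := C (A 0 1) * X + C (A 1 1) with hq
  set p : ℝ[X] := C (A 0 0) * X + C (A 1 0) with hp
  have key : ∑ j : Fin (2*n), ((2*n - 1).choose (j : ℕ) : ℝ) * s ^ (j : ℕ) *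
      (q ^ (j : ℕ) * p ^ (2*n - 1 - (j : ℕ))).coeff (2*n - 1 - (i : ℕ))
      = ((C (A 0 0 + A 0 1 * s) * X + C (A 1 0 + A 1 1 * s)) ^ (2*n - 1)).coeff
          (2*n - 1 - (i : ℕ)) := by
    rw [show C (A 0 0 + A 0 1 * s) * X + C (A 1 0 + A 1 1 * s) = C s * q + p by
      rw [hq, hp]; simp only [map_add, map_mul]; ring]
    rw [add_pow, finsetSum_coeff, Nat.sub_add_cancel (by omega), Finset.sum_range]
    refine Finset.sum_congr rfl fun j _ => ?_
    rw [← coeff_C_mul]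
    congr 1
    simp only [mul_pow, map_mul, map_pow, map_natCast]
    ring
  calc (Zrep n A).mulVec (powVec n 1 s) i
      = (alphaCoef n i)⁻¹ * ∑ j : Fin (2*n), ((2*n - 1).choose (j : ℕ) : ℝ) * s ^ (j : ℕ) *
          (q ^ (j : ℕ) * p ^ (2*n - 1 - (j : ℕ))).coeff (2*n - 1 - (i : ℕ)) := by
        rw [Matrix.mulVec, dotProduct, Finset.mul_sum]
        refine Finset.sum_congr rfl fun j _ => ?_
        rw [Zrep_apply, ← alphaCoef_sq, powVec, one_pow]
        ring
    _ = _ := by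
        rw [key, coeff_linear_pow, Nat.choose_symm (by omega), ← alphaCoef_sq, powVec,
          Nat.sub_sub_self (by omega)]
        field_simp [alphaCoef_ne_zero n i]

lemma Jmat_mulVec (n : ℕ) (v : Fin (2*n) → ℝ) (i : Fin (2*n)) :
    (Jmat n).mulVec v i = (-1) ^ (2*n - (i : ℕ)) * v i.rev := by
  have hi := i.isLt
  rw [Matrix.mulVec, dotProduct, Finset.sum_eq_single i.rev]
  · rw [Jmat, Matrix.of_apply, Fin.val_rev, if_pos (by omega)]
    congr 2
    omega
  · intro j _ hj
    rw [Jmat, Matrix.of_apply, if_neg, zero_mul]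
    intro h
    apply hj
    ext
    rw [Fin.val_rev]
    omega
  · simp

/-- On powers of linear forms, `J` is minus the `m`-th power of a `2 × 2` determinant. -/
lemma powVec_form (n : ℕ) (hn : 1 ≤ n) (x y x' y' : ℝ) :
    powVec n x y ⬝ᵥ (Jmat n).mulVec (powVec n x' y') = -(y * x' - x * y') ^ (2*n - 1) := by
  rw [sub_eq_add_neg, add_pow, Nat.sub_add_cancel (by omega), Finset.sum_range, dotProduct,
    ← Finset.sum_neg_distrib]
  refine Finset.sum_congr rfl fun i _ => ?_
  have hi := i.isLt
  rw [Jmat_mulVec, ← alphaCoef_sq, powVec, powVec, alphaCoef_rev, Fin.val_rev,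
    show 2*n - 1 - (2*n - ((i : ℕ) + 1)) = i by omega,
    show 2*n - ((i : ℕ) + 1) = 2*n - 1 - i by omega,
    show 2*n - (i : ℕ) = 2*n - 1 - i + 1 by omega,
    neg_pow (x * y'), mul_pow, mul_pow]
  ring

/-- A bilinear form is determined by its values on the vectors `w(1, s)`: these vectors span,
by the Vandermonde determinant. -/
lemma eq_of_powVec_form (n : ℕ) (M N : Matrix (Fin (2*n)) (Fin (2*n)) ℝ)
    (h : ∀ s t : ℝ, powVec n 1 s ⬝ᵥ M.mulVec (powVec n 1 t)
      = powVec n 1 s ⬝ᵥ N.mulVec (powVec n 1 t)) : M = N := by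
  let r : Fin (2*n) → ℝ := fun k => ((k : ℕ) : ℝ)
  let V : Matrix (Fin (2*n)) (Fin (2*n)) ℝ :=
    Matrix.vandermonde r * Matrix.diagonal (alphaCoef n)
  have hrow : ∀ k, V k = powVec n 1 (r k) := by
    intro k
    ext j
    simp [V, powVec, Matrix.mul_diagonal, Matrix.vandermonde_apply, mul_comm]
  have hdet : IsUnit V := by
    rw [Matrix.isUnit_iff_isUnit_det, isUnit_iff_ne_zero, Matrix.det_mul, Matrix.det_diagonal]
    refine mul_ne_zero (Matrix.det_vandermonde_ne_zero_iff.2 ?_)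
      (Finset.prod_ne_zero_iff.2 fun j _ => alphaCoef_ne_zero n j)
    intro k l hkl
    exact Fin.ext (Nat.cast_injective hkl)
  have hent : ∀ (L : Matrix (Fin (2*n)) (Fin (2*n)) ℝ) k l,
      (V * (L * Vᵀ)) k l = powVec n 1 (r k) ⬝ᵥ L.mulVec (powVec n 1 (r l)) := by
    intro L k l
    rw [← hrow, ← hrow]
    rfl
  have hV : V * (M * Vᵀ) = V * (N * Vᵀ) := by
    ext k l
    rw [hent, hent, h]
  exact ((Matrix.isUnit_transpose V).2 hdet).mul_right_cancel (hdet.mul_left_cancel hV)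

lemma dotProduct_mulVec_conj {ι : Type*} [Fintype ι] (Z J : Matrix ι ι ℝ) (u v : ι → ℝ) :
    u ⬝ᵥ (Zᵀ * J * Z).mulVec v = Z.mulVec u ⬝ᵥ J.mulVec (Z.mulVec v) := by
  rw [← Matrix.mulVec_mulVec, ← Matrix.mulVec_mulVec, Matrix.dotProduct_mulVec,
    Matrix.vecMul_transpose]

lemma Zrep_transpose_mul_Jmat_mul (n : ℕ) (hn : 1 ≤ n) (A : Matrix (Fin 2) (Fin 2) ℝ)
    (hA : A.det = 1) : (Zrep n A)ᵀ * Jmat n * Zrep n A = Jmat n := by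
  refine eq_of_powVec_form n _ _ fun s t => ?_
  rw [dotProduct_mulVec_conj, Zrep_mulVec_powVec, Zrep_mulVec_powVec, powVec_form n hn,
    powVec_form n hn]
  rw [Matrix.det_fin_two] at hA
  congr 2
  linear_combination (s - t) * hA

lemma Jmat_mulVec_injective (n : ℕ) : Function.Injective (Jmat n).mulVec := by
  intro u v h
  ext i
  have hi := congrFun h i.rev
  rw [Jmat_mulVec, Jmat_mulVec, Fin.rev_rev] at hi
  exact mul_left_cancel₀ (pow_ne_zero _ (by norm_num)) hi

/-- For every `A ∈ SL(2,ℝ)`, the representation `Z` preserves the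
symplectic form given by `J`: `⟨Z(A)u, J Z(A)v⟩ = ⟨u, Jv⟩` for all `u, v`
(equivalently `Z(A)ᵀ J Z(A) = J`); consequently `(u,t) ↦ (Z(A)u, t)` is an automorphism
of the Heisenberg group `H_{2n+1}`. -/
theorem Zrep_symplectic (n : ℕ) (hn : 1 ≤ n)
    (A : Matrix (Fin 2) (Fin 2) ℝ) (hA : A.det = 1) :
    (∀ u v : Fin (2*n) → ℝ,
      (Zrep n A).mulVec u ⬝ᵥ (Jmat n).mulVec ((Zrep n A).mulVec v) = u ⬝ᵥ (Jmat n).mulVec v) ∧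
    (Zrep n A)ᵀ * Jmat n * Zrep n A = Jmat n ∧
    Function.Bijective (fun p : (Fin (2*n) → ℝ) × ℝ => ((Zrep n A).mulVec p.1, p.2)) ∧
    (∀ p q : (Fin (2*n) → ℝ) × ℝ,
      ((Zrep n A).mulVec (heisMul n p q).1, (heisMul n p q).2) =
        heisMul n ((Zrep n A).mulVec p.1, p.2) ((Zrep n A).mulVec q.1, q.2)) := by
  have hJ := Zrep_transpose_mul_Jmat_mul n hn A hA
  have hform : ∀ u v : Fin (2*n) → ℝ,
      (Zrep n A).mulVec u ⬝ᵥ (Jmat n).mulVec ((Zrep n A).mulVec v)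
        = u ⬝ᵥ (Jmat n).mulVec v := by
    intro u v
    rw [← dotProduct_mulVec_conj, hJ]
  have hinj : Function.Injective (Zrep n A).mulVec := by
    intro u v h
    apply Jmat_mulVec_injective n
    rw [← hJ, ← Matrix.mulVec_mulVec, h, Matrix.mulVec_mulVec]
  have hsurj : Function.Surjective (Zrep n A).mulVec :=
    Matrix.mulVec_surjective_iff_isUnit.2 (Matrix.mulVec_injective_iff_isUnit.1 hinj)
  refine ⟨hform, hJ, ?_, ?_⟩
  · exact Function.Bijective.prodMap ⟨hinj, hsurj⟩ Function.bijective_id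
  · intro p q
    simp only [heisMul, Matrix.mulVec_add, hform]

end
end
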